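/- For β in (0, π/4] and α in (β, π/2), we have cos²(β)/cos²(α) + (β·tan(β))/(α·tan(α))·sin²(α) ≥ 1 + sin²(α). -/

import Mathlib

open Real

theorem stmt_3 (β α : ℝ) (hβ0 : 0 < β) (hβ : β ≤ π / 4) (hβα : β < α) (hα : α < π / 2) :
    Real.cos β ^ 2 / Real.cos α ^ 2 +
        (β * Real.tan β) / (α * Real.tan α) * Real.sin α ^ 2 ≥
      1 + Real.sin α ^ 2 := by
  have hpos : ∀ x, β ≤ x → x ≤ α → 0 < x ∧ 0 < sin x ∧ 0 < cos x := fun x h1 h2 =>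
    ⟨by linarith, sin_pos_of_pos_of_lt_pi (by linarith) (by linarith),
      cos_pos_of_mem_Ioo ⟨by linarith, by linarith⟩⟩
  obtain ⟨K, hK⟩ : ∃ K, K = β * tan β := ⟨_, rfl⟩
  have hder : ∀ x, β ≤ x → x ≤ α → HasDerivAt
      (fun x => sin x ^ 4 + K * (sin x / x * cos x ^ 3))
      (4 * sin x ^ 3 * cos x + K * ((cos x * x - sin x * 1) / x ^ 2 * cos x ^ 3
        + sin x / x * (3 * cos x ^ 2 * (-sin x)))) x := by
    intro x h1 h2
    have hx := (hpos x h1 h2).1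
    have a := (hasDerivAt_sin x).fun_pow 4
    have b := (hasDerivAt_cos x).fun_pow 3
    have c := (hasDerivAt_sin x).fun_div (hasDerivAt_id' x) hx.ne'
    have := a.fun_add ((c.fun_mul b).const_mul K)
    refine this.congr_deriv ?_
    norm_num
  have hmono : MonotoneOn (fun x => sin x ^ 4 + K * (sin x / x * cos x ^ 3)) (Set.Icc β α) := by
    apply monotoneOn_of_deriv_nonneg (convex_Icc _ _)
    · exact fun x hx => (hder x hx.1 hx.2).continuousAt.continuousWithinAt
    · intro x hx
      rw [interior_Icc] at hx
      exact (hder x hx.1.le hx.2.le).differentiableAt.differentiableWithinAt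
    · intro x hx
      rw [interior_Icc] at hx
      rw [(hder x hx.1.le hx.2.le).deriv]
      obtain ⟨hx0, hs, hc⟩ := hpos x hx.1.le hx.2.le
      have hxp : x < π / 2 := hx.2.trans hα
      have ht : tan β < tan x := tan_lt_tan_of_nonneg_of_lt_pi_div_two hβ0.le hxp hx.1
      have htx : tan x * cos x = sin x := tan_mul_cos hc.ne'
      have hKc : K * cos x ≤ x * sin x := by
        rw [← htx, ← mul_assoc, hK]
        have : 0 ≤ tan β := tan_nonneg_of_nonneg_of_le_pi_div_two hβ0.le (by linarith)
        have := mul_le_mul hx.1.le ht.le this hx0.le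
        exact mul_le_mul_of_nonneg_right this hc.le
      have hxt : x * cos x ≤ sin x := by
        rw [← htx]
        exact mul_le_mul_of_nonneg_right (lt_tan hx0 hxp).le hc.le
      have hsx : sin x * cos x ≤ x := by
        have := sin_lt hx0
        nlinarith [cos_le_one x]
      have hsc := sin_sq_add_cos_sq x
      have h1 := mul_le_mul_of_nonneg_right hKc
        (show 0 ≤ (sin x - x * cos x) * cos x ^ 2 + 3 * x * sin x ^ 2 * cos x by
          have := sub_nonneg.2 hxt
          positivity)
      have h2 : 0 ≤ x * sin x * cos x * (x - sin x * cos x) := by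
        have := sub_nonneg.2 hsx
        positivity
      have e : 4 * sin x ^ 3 * cos x + K * ((cos x * x - sin x * 1) / x ^ 2 * cos x ^ 3
        + sin x / x * (3 * cos x ^ 2 * (-sin x))) =
        (4 * x ^ 2 * sin x ^ 3 * cos x - K * cos x *
          ((sin x - x * cos x) * cos x ^ 2 + 3 * x * sin x ^ 2 * cos x)) / x ^ 2 := by
        field_simp
        ring
      rw [e]
      apply div_nonneg _ (by positivity)
      have h3 : 4 * x ^ 2 * sin x ^ 3 * cos x - x * sin x *
          ((sin x - x * cos x) * cos x ^ 2 + 3 * x * sin x ^ 2 * cos x)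
          = x * sin x * cos x * (x - sin x * cos x) := by
        linear_combination (x ^ 2 * sin x * cos x) * hsc
      linarith
  have key := hmono (Set.left_mem_Icc.2 hβα.le) (Set.right_mem_Icc.2 hβα.le) hβα.le
  obtain ⟨hb0, hsb, hcb⟩ := hpos β le_rfl hβα.le
  obtain ⟨ha0, hsa, hca⟩ := hpos α hβα.le le_rfl
  have hb := sin_sq_add_cos_sq β
  have ha := sin_sq_add_cos_sq α
  have e1 : sin β ^ 4 + K * (sin β / β * cos β ^ 3) = sin β ^ 2 := by
    rw [hK, tan_eq_sin_div_cos]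
    field_simp
    linear_combination hb
  simp only [e1] at key
  rw [← hK, tan_eq_sin_div_cos α]
  have e2 : cos β ^ 2 / cos α ^ 2 + K / (α * (sin α / cos α)) * sin α ^ 2 - (1 + sin α ^ 2)
      = (sin α ^ 4 + K * (sin α / α * cos α ^ 3) - sin β ^ 2) / cos α ^ 2 := by
    have h1 : cos β ^ 2 = 1 - sin β ^ 2 := by linarith
    have h2 : sin α ^ 4 = 1 - (1 + sin α ^ 2) * cos α ^ 2 := by
      linear_combination (1 + sin α ^ 2) * ha
    rw [h1, h2]
    field_simp
    ring
  have := div_nonneg (sub_nonneg.2 key) (sq_nonneg (cos α))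
  linarith
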